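/- Let f : Λ(n)³ → ℤ satisfy the Duistermaat axioms. For Lagrangian planes L₁, L₂, L₃, let s(L₁,L₂,L₃) := n_+(Ω) − n_−(Ω) be the signature of the Hermitian form Ω on L₁ ⊕ L₂ ⊕ L₃ (the Hörmander–Kashiwara–Wall index). Then s(L₁,L₂,L₃) = f(L₂,L₁,L₃) − f(L₃,L₁,L₂), and equivalently f(L₁,L₂,L₃) = ½ (n − dim(L₁∩L₂) + dim(L₁∩L₃) − dim(L₂∩L₃) − s(L₁,L₂,L₃)). -/

import Mathlib

/-!
Any three Lagrangian planes `L₁, L₂, L₃` have a common Lagrangian complement `N`, which can be taken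
to be the graph of a real scalar `t`: a Lagrangian plane meets such graphs nontrivially for only
finitely many `t` (`finite_bad`). A symplectic map carries `N` to `G_∞` and, consequently, each `Lᵢ`
to the graph of a Hermitian matrix `Aᵢ` (`exists_herm`).

A shear and the normalization axiom give `f(Lᵢ, Lⱼ, N) = n₋(Aⱼ - Aᵢ)` (`f_eq_negIdxM`), so by the
cocycle property `f(L₁, L₂, L₃) = n₋(A₂ - A₁) - n₋(A₃ - A₁) + n₋(A₃ - A₂)`, and likewise for every
permutation of the planes.

On the other side, with `P = A₂ - A₁`, `Q = A₃ - A₂`, `R = A₁ - A₃` one has `P + Q + R = 0` and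
`Ω(x, x) = 2 Re (⟨x₁, P x₂⟩ + ⟨x₂, Q x₃⟩ + ⟨x₃, R x₁⟩)`. In the coordinates `u₁ = -x₁ + x₂ + x₃`,
`u₂ = x₁ - x₂ + x₃`, `u₃ = x₁ + x₂ - x₃` this equals
`(⟨u₁, Q u₁⟩ + ⟨u₂, R u₂⟩ + ⟨u₃, P u₃⟩) / 2`, whence `s = sgn P + sgn Q + sgn R`
(`tripleForm_inertia`). Both identities then follow from `n₊(P) + n₋(P) + dim ker P = n` and
`dim ker P = dim (L₁ ∩ L₂)`, together with the analogues for `Q` and `R`.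
-/

open Matrix

/-- The Hermitian symplectic space `ℂⁿ ⊕ ℂⁿ`. -/
abbrev SympSpace (n : ℕ) := (Fin n → ℂ) × (Fin n → ℂ)

/-- The symplectic form `ω((x₁,x₂),(y₁,y₂)) = ⟨x₁,y₂⟩ − ⟨x₂,y₁⟩`. -/
noncomputable def omegaForm {n : ℕ} (u v : SympSpace n) : ℂ :=
  star u.1 ⬝ᵥ v.2 - star u.2 ⬝ᵥ v.1

/-- A subspace is Lagrangian iff it coincides with its symplectic complement. -/
def IsLagrangian {n : ℕ} (L : Submodule ℂ (SympSpace n)) : Prop :=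
  ∀ v, v ∈ L ↔ ∀ u ∈ L, omegaForm u v = 0

/-- The Lagrangian Grassmannian `Λ(n)`. -/
abbrev LagGr (n : ℕ) := {L : Submodule ℂ (SympSpace n) // IsLagrangian L}

/-- The graph `G_M = {(x, Mx)}` of a matrix `M`. -/
noncomputable def graphOf {n : ℕ} (M : Matrix (Fin n) (Fin n) ℂ) :
    Submodule ℂ (SympSpace n) := LinearMap.graph M.mulVecLin

/-- The vertical subspace `G_∞ = 0 ⊕ ℂⁿ`. -/
noncomputable def vertSub (n : ℕ) : Submodule ℂ (SympSpace n) :=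
  (⊥ : Submodule ℂ (Fin n → ℂ)).prod (⊤ : Submodule ℂ (Fin n → ℂ))

/-- The negative index (Morse index) of a sesquilinear form: the maximal dimension of a
subspace on which it is negative definite. -/
noncomputable def formNegIdx {V : Type*} [AddCommGroup V] [Module ℂ V]
    (Q : V → V → ℂ) : ℕ :=
  sSup {d : ℕ | ∃ W : Submodule ℂ V, Module.finrank ℂ W = d ∧
    ∀ x ∈ W, x ≠ 0 → (Q x x).re < 0}

/-- The number of negative eigenvalues (Morse index) of a Hermitian matrix, as the
maximal dimension of a subspace on which the associated form is negative definite. -/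
noncomputable def negIdxM {n : ℕ} (A : Matrix (Fin n) (Fin n) ℂ) : ℕ :=
  formNegIdx (fun x y : Fin n → ℂ => star x ⬝ᵥ A.mulVec y)

/-- A symplectic transformation: a bijective linear map preserving `ω`. -/
def IsSymplecticMap {n : ℕ} (S : SympSpace n ≃ₗ[ℂ] SympSpace n) : Prop :=
  ∀ u v, omegaForm (S u) (S v) = omegaForm u v

/-- The Duistermaat axioms for `f : Λ(n)³ → ℤ`: normalization, symplectic invariance
and the cocycle property. -/
def SatisfiesDuiAxioms {n : ℕ} (f : LagGr n → LagGr n → LagGr n → ℤ) : Prop :=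
  (∀ (A : Matrix (Fin n) (Fin n) ℂ), A.IsHermitian →
    ∀ L₁ L₂ L₃ : LagGr n,
      L₁.val = graphOf (0 : Matrix (Fin n) (Fin n) ℂ) →
      L₂.val = graphOf A → L₃.val = vertSub n →
      f L₁ L₂ L₃ = negIdxM A) ∧
  (∀ S : SympSpace n ≃ₗ[ℂ] SympSpace n, IsSymplecticMap S →
    ∀ L₁ L₂ L₃ M₁ M₂ M₃ : LagGr n,
      M₁.val = (L₁.val).map S.toLinearMap →
      M₂.val = (L₂.val).map S.toLinearMap →
      M₃.val = (L₃.val).map S.toLinearMap →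
      f M₁ M₂ M₃ = f L₁ L₂ L₃) ∧
  (∀ L₁ L₂ L₃ L₄ : LagGr n,
    f L₁ L₂ L₃ - f L₁ L₂ L₄ + f L₁ L₃ L₄ - f L₂ L₃ L₄ = 0)

/-- The Hermitian form `Ω` on the external direct sum `L₁ ⊕ L₂ ⊕ L₃`:
`Ω(x;y) = ω(x₁,y₂) + ω(x₂,y₃) + ω(x₃,y₁) − ω(x₂,y₁) − ω(x₃,y₂) − ω(x₁,y₃)`. -/
noncomputable def tripleForm {n : ℕ} (L₁ L₂ L₃ : Submodule ℂ (SympSpace n))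
    (x y : ↥L₁ × ↥L₂ × ↥L₃) : ℂ :=
  omegaForm (x.1 : SympSpace n) (y.2.1 : SympSpace n)
    + omegaForm (x.2.1 : SympSpace n) (y.2.2 : SympSpace n)
    + omegaForm (x.2.2 : SympSpace n) (y.1 : SympSpace n)
    - omegaForm (x.2.1 : SympSpace n) (y.1 : SympSpace n)
    - omegaForm (x.2.2 : SympSpace n) (y.2.1 : SympSpace n)
    - omegaForm (x.1 : SympSpace n) (y.2.2 : SympSpace n)

/-- The positive index of a sesquilinear form: the maximal dimension of a subspace on
which it is positive definite. -/
noncomputable def formPosIdx {V : Type*} [AddCommGroup V] [Module ℂ V]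
    (Q : V → V → ℂ) : ℕ :=
  sSup {d : ℕ | ∃ W : Submodule ℂ V, Module.finrank ℂ W = d ∧
    ∀ x ∈ W, x ≠ 0 → 0 < (Q x x).re}

/-! ### Inertia of diagonalized forms -/

section Inertia

variable {V : Type*} [AddCommGroup V] [Module ℂ V]

/-- Sylvester's law of inertia for a form in diagonal shape: a positive definite subspace injects
into the coordinates with positive coefficient, and those coordinates span such a subspace. -/
lemma formPosIdx_diag {ι : Type*} [Fintype ι] (Q : V → V → ℂ) (e : V ≃ₗ[ℂ] (ι → ℂ)) (d : ι → ℝ)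
    (h : ∀ x, (Q x x).re = ∑ i, d i * ‖e x i‖ ^ 2) :
    formPosIdx Q = Fintype.card {i // 0 < d i} := by
  classical
  have : FiniteDimensional ℂ V := Module.Finite.equiv e.symm
  apply IsGreatest.csSup_eq
  constructor
  · let E : ({i // 0 < d i} → ℂ) →ₗ[ℂ] V :=
      e.symm.toLinearMap ∘ₗ Function.ExtendByZero.linearMap ℂ (Subtype.val : {i // 0 < d i} → ι)
    have hE : ∀ v (i : {i // 0 < d i}), e (E v) i = v i := by
      intro v i
      simp only [E, Function.ExtendByZero.linearMap, LinearMap.comp_apply, LinearEquiv.coe_coe,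
        LinearEquiv.apply_symm_apply]
      exact Subtype.val_injective.extend_apply _ _ _
    have hE0 : ∀ v i, ¬ 0 < d i → e (E v) i = 0 := by
      intro v i hi
      simp only [E, Function.ExtendByZero.linearMap, LinearMap.comp_apply, LinearEquiv.coe_coe,
        LinearEquiv.apply_symm_apply]
      exact Function.extend_apply' _ _ _ (by rintro ⟨a, rfl⟩; exact hi a.2)
    have hinj : Function.Injective E := by
      intro v w hvw
      funext i
      rw [← hE v i, ← hE w i, hvw]
    refine ⟨LinearMap.range E, ?_, ?_⟩
    · rw [LinearMap.finrank_range_of_inj hinj, Module.finrank_fintype_fun_eq_card]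
    · rintro _ ⟨v, rfl⟩ hv
      rw [h]
      have hv0 : v ≠ 0 := by rintro rfl; simp at hv
      obtain ⟨i, hi⟩ := Function.ne_iff.mp hv0
      apply Finset.sum_pos'
      · intro j _
        by_cases hj : 0 < d j
        · positivity
        · simp [hE0 v j hj]
      · refine ⟨i, Finset.mem_univ _, ?_⟩
        rw [hE]
        have := norm_pos_iff.mpr hi
        have := i.2
        positivity
  · rintro k ⟨W, rfl, hW⟩
    let F : W →ₗ[ℂ] ({i // 0 < d i} → ℂ) :=
      LinearMap.funLeft ℂ ℂ (Subtype.val : {i // 0 < d i} → ι) ∘ₗ e.toLinearMap ∘ₗ W.subtype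
    have hF : Function.Injective F := by
      rw [injective_iff_map_eq_zero]
      intro w hw
      by_contra hne
      have h1 := hW w w.2 (by simpa using hne)
      rw [h] at h1
      refine absurd h1 (not_lt.mpr (Finset.sum_nonpos fun i _ => ?_))
      by_cases hi : 0 < d i
      · have h2 : e w i = 0 := congrFun hw ⟨i, hi⟩
        simp [h2]
      · exact mul_nonpos_of_nonpos_of_nonneg (not_lt.mp hi) (by positivity)
    simpa using LinearMap.finrank_le_finrank_of_injective hF

lemma formNegIdx_eq (Q : V → V → ℂ) : formNegIdx Q = formPosIdx (fun x y => -Q x y) := by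
  simp [formNegIdx, formPosIdx]

lemma formNegIdx_diag {ι : Type*} [Fintype ι] (Q : V → V → ℂ) (e : V ≃ₗ[ℂ] (ι → ℂ)) (d : ι → ℝ)
    (h : ∀ x, (Q x x).re = ∑ i, d i * ‖e x i‖ ^ 2) :
    formNegIdx Q = Fintype.card {i // d i < 0} := by
  rw [formNegIdx_eq, formPosIdx_diag _ e (fun i => -d i)]
  · simp only [Left.neg_pos_iff]
  · intro x
    simp [h]

end Inertia

/-- The number of positive eigenvalues of a Hermitian matrix, defined like `negIdxM`. -/
noncomputable def posIdxM {n : ℕ} (A : Matrix (Fin n) (Fin n) ℂ) : ℕ :=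
  formPosIdx (fun x y : Fin n → ℂ => star x ⬝ᵥ A.mulVec y)

lemma negIdxM_neg {n : ℕ} (A : Matrix (Fin n) (Fin n) ℂ) : negIdxM (-A) = posIdxM A := by
  simp [negIdxM, posIdxM, formNegIdx_eq, neg_mulVec]

/-- Spectral theorem: the form of a Hermitian matrix is diagonal in suitable coordinates, and the
number of vanishing coefficients is the dimension of the kernel. -/
lemma exists_diag {n : ℕ} {A : Matrix (Fin n) (Fin n) ℂ} (hA : A.IsHermitian) :
    ∃ (e : (Fin n → ℂ) ≃ₗ[ℂ] (Fin n → ℂ)) (d : Fin n → ℝ),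
      (∀ x, (star x ⬝ᵥ A *ᵥ x).re = ∑ i, d i * ‖e x i‖ ^ 2) ∧
      Module.finrank ℂ (LinearMap.ker A.mulVecLin) = Fintype.card {i // d i = 0} := by
  set U : Matrix (Fin n) (Fin n) ℂ := (hA.eigenvectorUnitary : Matrix (Fin n) (Fin n) ℂ)
  have h1 : star U * U = 1 := Unitary.coe_star_mul_self _
  have h2 : U * star U = 1 := Unitary.coe_mul_star_self _
  refine ⟨Matrix.toLin'OfInv h2 h1, hA.eigenvalues, ?_, ?_⟩
  · intro x
    have hs : A = U * diagonal (RCLike.ofReal ∘ hA.eigenvalues) * star U := by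
      have := hA.spectral_theorem
      rwa [Unitary.conjStarAlgAut_apply] at this
    have he : ∀ i, (Matrix.toLin'OfInv h2 h1) x i = (star U *ᵥ x) i := fun i => by
      simp [toLin'OfInv]
    simp only [he]
    have : star x ⬝ᵥ A *ᵥ x
        = star (star U *ᵥ x) ⬝ᵥ diagonal (RCLike.ofReal ∘ hA.eigenvalues) *ᵥ (star U *ᵥ x) := by
      conv_lhs => rw [hs]
      rw [star_mulVec, ← mulVec_mulVec, ← mulVec_mulVec, ← dotProduct_mulVec,
        star_eq_conjTranspose, conjTranspose_conjTranspose]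
    rw [this]
    simp only [dotProduct, mulVec_diagonal, Complex.re_sum]
    refine Finset.sum_congr rfl fun i _ => ?_
    simp [← Complex.normSq_eq_norm_sq, Complex.normSq_apply]
    ring
  · have h3 := hA.rank_eq_card_non_zero_eigs
    have h4 := LinearMap.finrank_range_add_finrank_ker A.mulVecLin
    have h5 := Fintype.card_subtype_compl (fun i => hA.eigenvalues i = 0)
    have h6 := Fintype.card_subtype_le (fun i => hA.eigenvalues i = 0)
    rw [Matrix.rank] at h3
    simp only [Module.finrank_fintype_fun_eq_card, Fintype.card_fin] at h4 h5 h6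
    simp only [ne_eq] at h3
    omega

lemma card_trichotomy {ι : Type*} [Fintype ι] (d : ι → ℝ) :
    Fintype.card {i // 0 < d i} + Fintype.card {i // d i < 0} + Fintype.card {i // d i = 0}
      = Fintype.card ι := by
  classical
  simp only [Fintype.card_subtype]
  rw [← Finset.card_union_of_disjoint, ← Finset.card_union_of_disjoint, ← Finset.card_univ]
  · congr 1
    ext i
    have := lt_trichotomy (d i) 0
    simp
    tauto
  · simp only [Finset.disjoint_left, Finset.mem_union, Finset.mem_filter, Finset.mem_univ,
      true_and]
    rintro i (h | h) <;> linarith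
  · simp only [Finset.disjoint_left, Finset.mem_filter, Finset.mem_univ, true_and]
    intro i h
    linarith

lemma posIdxM_add_negIdxM {n : ℕ} {A : Matrix (Fin n) (Fin n) ℂ} (hA : A.IsHermitian) :
    posIdxM A + negIdxM A + Module.finrank ℂ (LinearMap.ker A.mulVecLin) = n := by
  obtain ⟨e, d, h, hk⟩ := exists_diag hA
  rw [posIdxM, negIdxM, formPosIdx_diag _ e d h, formNegIdx_diag _ e d h, hk, card_trichotomy,
    Fintype.card_fin]

/-- Inertia is additive over an orthogonal sum of three Hermitian forms, and is unaffected by the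
positive factor `1/2`. -/
lemma inertia_sum {n : ℕ} {V : Type*} [AddCommGroup V] [Module ℂ V] (Q : V → V → ℂ)
    {A B C : Matrix (Fin n) (Fin n) ℂ} (hA : A.IsHermitian) (hB : B.IsHermitian)
    (hC : C.IsHermitian)
    (g : V ≃ₗ[ℂ] (Fin n → ℂ) × (Fin n → ℂ) × (Fin n → ℂ))
    (h : ∀ x, (Q x x).re = ((star (g x).1 ⬝ᵥ A *ᵥ (g x).1).re
      + (star (g x).2.1 ⬝ᵥ B *ᵥ (g x).2.1).re + (star (g x).2.2 ⬝ᵥ C *ᵥ (g x).2.2).re) / 2) :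
    formPosIdx Q = posIdxM A + posIdxM B + posIdxM C ∧
    formNegIdx Q = negIdxM A + negIdxM B + negIdxM C := by
  obtain ⟨e₁, d₁, h₁, -⟩ := exists_diag hA
  obtain ⟨e₂, d₂, h₂, -⟩ := exists_diag hB
  obtain ⟨e₃, d₃, h₃, -⟩ := exists_diag hC
  let e : V ≃ₗ[ℂ] (Fin n ⊕ (Fin n ⊕ Fin n) → ℂ) :=
    g ≪≫ₗ (e₁.prodCongr ((e₂.prodCongr e₃) ≪≫ₗ (LinearEquiv.sumArrowLequivProdArrow _ _ ℂ ℂ).symm))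
      ≪≫ₗ (LinearEquiv.sumArrowLequivProdArrow _ _ ℂ ℂ).symm
  let d : Fin n ⊕ (Fin n ⊕ Fin n) → ℝ :=
    Sum.elim (fun i => d₁ i / 2) (Sum.elim (fun i => d₂ i / 2) (fun i => d₃ i / 2))
  have hQ : ∀ x, (Q x x).re = ∑ i, d i * ‖e x i‖ ^ 2 := by
    intro x
    rw [h, h₁, h₂, h₃]
    simp [e, d, Fintype.sum_sum_type, add_div, Finset.sum_div, add_assoc, div_mul_eq_mul_div]
  rw [formPosIdx_diag _ e d hQ, formNegIdx_diag _ e d hQ]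
  simp only [posIdxM, negIdxM]
  rw [formPosIdx_diag _ e₁ d₁ h₁, formPosIdx_diag _ e₂ d₂ h₂, formPosIdx_diag _ e₃ d₃ h₃,
    formNegIdx_diag _ e₁ d₁ h₁, formNegIdx_diag _ e₂ d₂ h₂, formNegIdx_diag _ e₃ d₃ h₃]
  constructor
  · rw [Fintype.card_congr (Equiv.subtypeSum), Fintype.card_sum,
      Fintype.card_congr (Equiv.subtypeSum), Fintype.card_sum]
    simp [d, add_assoc]
  · rw [Fintype.card_congr (Equiv.subtypeSum), Fintype.card_sum,
      Fintype.card_congr (Equiv.subtypeSum), Fintype.card_sum]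
    have h2 : ∀ r : ℝ, r / 2 < 0 ↔ r < 0 := fun r => ⟨fun h => by linarith, fun h => by linarith⟩
    simp [d, add_assoc, h2]

/-! ### Symplectic linear algebra -/

section Symplectic

variable {n : ℕ}

/-- The symplectic map `(x, y) ↦ (y - t x, -x)`; it carries the graph of `t • 1` to `G_∞`. -/
noncomputable def turn (n : ℕ) (t : ℝ) : SympSpace n ≃ₗ[ℂ] SympSpace n where
  toFun p := (p.2 - (t : ℂ) • p.1, -p.1)
  invFun q := (-q.2, q.1 - (t : ℂ) • q.2)
  map_add' p q := by ext i <;> simp <;> ring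
  map_smul' c p := by ext i <;> simp; ring
  left_inv p := by ext i <;> simp
  right_inv p := by ext i <;> simp

lemma turn_apply (t : ℝ) (p : SympSpace n) : turn n t p = (p.2 - (t : ℂ) • p.1, -p.1) := rfl

lemma turn_symplectic (t : ℝ) : IsSymplecticMap (turn n t) := by
  intro u v
  simp only [omegaForm, turn_apply, star_sub, star_smul, star_neg, sub_dotProduct, dotProduct_sub,
    dotProduct_neg, neg_dotProduct, smul_dotProduct, dotProduct_smul, Complex.star_def,
    Complex.conj_ofReal]
  ring

/-- The symplectic shear `(x, y) ↦ (x, y - A x)`; it carries `G_B` to `G_{B - A}` and fixes `G_∞`. -/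
noncomputable def shear (A : Matrix (Fin n) (Fin n) ℂ) : SympSpace n ≃ₗ[ℂ] SympSpace n where
  toFun p := (p.1, p.2 - A *ᵥ p.1)
  invFun p := (p.1, p.2 + A *ᵥ p.1)
  map_add' p q := by ext i <;> simp [mulVec_add]; ring
  map_smul' c p := by ext i <;> simp [mulVec_smul]; ring
  left_inv p := by ext i <;> simp
  right_inv p := by ext i <;> simp

lemma shear_apply (A : Matrix (Fin n) (Fin n) ℂ) (p : SympSpace n) :
    shear A p = (p.1, p.2 - A *ᵥ p.1) := rfl

lemma dot_herm {A : Matrix (Fin n) (Fin n) ℂ} (hA : A.IsHermitian) (x y : Fin n → ℂ) :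
    star (A *ᵥ x) ⬝ᵥ y = star x ⬝ᵥ A *ᵥ y := by
  rw [star_mulVec, hA.eq, dotProduct_mulVec]

lemma shear_symplectic {A : Matrix (Fin n) (Fin n) ℂ} (hA : A.IsHermitian) :
    IsSymplecticMap (shear A) := by
  intro u v
  simp only [omegaForm, shear_apply, star_sub, sub_dotProduct, dotProduct_sub, dot_herm hA]
  ring

lemma star_dot_conj (x y : Fin n → ℂ) : star (star x ⬝ᵥ y) = star y ⬝ᵥ x := by
  rw [star_dotProduct, star_star]

lemma omegaForm_symm_zero {u v : SympSpace n} (h : omegaForm u v = 0) : omegaForm v u = 0 := by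
  have : omegaForm v u = -star (omegaForm u v) := by
    simp only [omegaForm, star_sub]
    rw [star_dot_conj u.1, star_dot_conj u.2]
    ring
  rw [this, h, star_zero, neg_zero]

lemma IsLagrangian.map {L : Submodule ℂ (SympSpace n)} (hL : IsLagrangian L)
    {S : SympSpace n ≃ₗ[ℂ] SympSpace n} (hS : IsSymplecticMap S) :
    IsLagrangian (L.map S.toLinearMap) := by
  intro v
  have h1 : v ∈ L.map S.toLinearMap ↔ S.symm v ∈ L := by
    constructor
    · rintro ⟨w, hw, rfl⟩; simpa using hw
    · intro h; exact ⟨_, h, by simp⟩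
  rw [h1, hL]
  constructor
  · rintro h _ ⟨w, hw, rfl⟩
    have := hS w (S.symm v)
    rw [S.apply_symm_apply] at this
    exact this.trans (h w hw)
  · intro h u hu
    have := hS u (S.symm v)
    rw [S.apply_symm_apply] at this
    rw [← this]
    exact h _ ⟨u, hu, rfl⟩

open scoped ComplexOrder in
lemma graphOf_isLagrangian {A : Matrix (Fin n) (Fin n) ℂ} (hA : A.IsHermitian) :
    IsLagrangian (graphOf A) := by
  intro v
  simp only [graphOf, LinearMap.mem_graph_iff, mulVecLin_apply]
  constructor
  · intro hv u hu
    rw [omegaForm, hv, hu, dot_herm hA, sub_self]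
  · intro h
    have h2 : ∀ x : Fin n → ℂ, star x ⬝ᵥ (v.2 - A *ᵥ v.1) = 0 := by
      intro x
      have := h (x, A *ᵥ x) rfl
      rwa [omegaForm, dot_herm hA, ← dotProduct_sub] at this
    exact sub_eq_zero.mp (dotProduct_star_self_eq_zero.mp (h2 (v.2 - A *ᵥ v.1)))

/-- A Lagrangian subspace meets the graphs of only finitely many real scalars: vectors `(x, t x)`
and `(y, s y)` of `L` with `s ≠ t` real satisfy `(s - t) ⟨x, y⟩ = 0`, so that the scalars in
question are indexed by pairwise orthogonal nonzero vectors of `ℂⁿ`. -/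
lemma finite_bad {L : Submodule ℂ (SympSpace n)} (hL : IsLagrangian L) :
    {t : ℝ | ∃ x : Fin n → ℂ, x ≠ 0 ∧ (x, (t : ℂ) • x) ∈ L}.Finite := by
  set T := {t : ℝ | ∃ x : Fin n → ℂ, x ≠ 0 ∧ (x, (t : ℂ) • x) ∈ L} with hT
  choose x hx0 hxL using fun t : T => t.2
  let y : T → EuclideanSpace ℂ (Fin n) := fun t => WithLp.toLp 2 (x t)
  have hli : LinearIndependent ℂ y := by
    refine linearIndependent_of_ne_zero_of_inner_eq_zero ?_ ?_
    · intro t h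
      exact hx0 t (by simpa [y] using h)
    · intro s t hst
      have h1 := (hL _).mp (hxL s) _ (hxL t)
      simp only [omegaForm, star_smul, smul_dotProduct, dotProduct_smul, Complex.star_def,
        Complex.conj_ofReal, smul_eq_mul, ← sub_mul] at h1
      rcases mul_eq_zero.mp h1 with h | h
      · exact absurd (Subtype.ext (by exact_mod_cast sub_eq_zero.mp h)) hst
      · rw [← inner_conj_symm, EuclideanSpace.inner_eq_star_dotProduct]
        simp only [y]
        rw [dotProduct_comm, h, map_zero]
  have := hli.finite
  exact Set.toFinite T

/-- A Lagrangian subspace transverse to the graph of `t • 1` is carried by `turn n t` to the graph of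
a Hermitian matrix. The projection to the first factor is onto, because a vector `z` orthogonal to
its image would give `(0, z) ∈ L^ω = L`. -/
lemma exists_herm {L : Submodule ℂ (SympSpace n)} (hL : IsLagrangian L) {t : ℝ}
    (ht : ∀ x : Fin n → ℂ, (x, (t : ℂ) • x) ∈ L → x = 0) :
    ∃ A : Matrix (Fin n) (Fin n) ℂ, A.IsHermitian ∧ ∃ p : L ≃ₗ[ℂ] (Fin n → ℂ),
      ∀ v : L, turn n t v = (p v, A *ᵥ p v) := by
  let π : L →ₗ[ℂ] (Fin n → ℂ) :=
    LinearMap.fst ℂ _ _ ∘ₗ (turn n t).toLinearMap ∘ₗ L.subtype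
  have hπ : ∀ v : L, π v = v.1.2 - (t : ℂ) • v.1.1 := fun v => rfl
  have hinj : Function.Injective π := by
    rw [injective_iff_map_eq_zero]
    intro v hv
    rw [hπ, sub_eq_zero] at hv
    have h1 : v.1.1 = 0 := ht _ (by rw [← hv]; exact v.2)
    ext1
    apply Prod.ext
    · exact h1
    · rw [hv, h1]; simp
  have hsurj : Function.Surjective π := by
    rw [← LinearMap.range_eq_top]
    by_contra hne
    obtain ⟨g, hg0, hg⟩ := Submodule.exists_le_ker_of_lt_top _ (lt_top_iff_ne_top.mpr hne)
    obtain ⟨z, hz⟩ : ∃ z : Fin n → ℂ, ∀ x, g x = star z ⬝ᵥ x := by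
      refine ⟨fun i => star (g (Pi.single i 1)), fun x => ?_⟩
      conv_lhs => rw [pi_eq_sum_univ' x]
      simp only [map_sum, map_smul, smul_eq_mul, dotProduct, Pi.star_apply, star_star]
      refine Finset.sum_congr rfl fun i _ => ?_
      rw [mul_comm]
    have hmem : (z, (t : ℂ) • z) ∈ L := by
      rw [hL]
      intro u hu
      apply omegaForm_symm_zero
      have h1 : g (π ⟨u, hu⟩) = 0 := hg ⟨_, rfl⟩
      rw [hz, hπ] at h1
      simpa [omegaForm, dotProduct_sub, star_smul, smul_dotProduct, dotProduct_smul] using h1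
    apply hg0
    refine LinearMap.ext fun x => ?_
    simp [hz, ht z hmem]
  let p : L ≃ₗ[ℂ] (Fin n → ℂ) := LinearEquiv.ofBijective π ⟨hinj, hsurj⟩
  let A : Matrix (Fin n) (Fin n) ℂ := LinearMap.toMatrix'
    (LinearMap.snd ℂ _ _ ∘ₗ (turn n t).toLinearMap ∘ₗ L.subtype ∘ₗ p.symm.toLinearMap)
  have hpA : ∀ v : L, turn n t v = (p v, A *ᵥ p v) := by
    intro v
    apply Prod.ext
    · rfl
    · simp only [A]
      rw [← Matrix.toLin'_apply, Matrix.toLin'_toMatrix']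
      simp
  refine ⟨A, ?_, p, hpA⟩
  have key : ∀ x y : Fin n → ℂ, star x ⬝ᵥ A *ᵥ y = star (A *ᵥ x) ⬝ᵥ y := by
    intro x y
    have h1 := (hL _).mp (p.symm y).2 _ (p.symm x).2
    rw [← turn_symplectic t, hpA, hpA] at h1
    simpa [omegaForm, sub_eq_zero] using h1
  ext i j
  have := key (Pi.single i 1) (Pi.single j 1)
  simp only [star_mulVec, ← Pi.single_star, star_one] at this
  rw [← dotProduct_mulVec] at this
  simpa using this.symm

end Symplectic

/-! ### Reduction of the triple to graphs -/

section Reduction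

variable {n : ℕ}

lemma map_turn_eq {L : Submodule ℂ (SympSpace n)} {t : ℝ} {A : Matrix (Fin n) (Fin n) ℂ}
    (p : L ≃ₗ[ℂ] (Fin n → ℂ)) (hp : ∀ v : L, turn n t v = (p v, A *ᵥ p v)) :
    L.map (turn n t).toLinearMap = graphOf A := by
  ext w
  simp only [graphOf, LinearMap.mem_graph_iff, mulVecLin_apply]
  constructor
  · rintro ⟨v, hv, rfl⟩
    have := hp ⟨v, hv⟩
    simp only [LinearEquiv.coe_coe] at this ⊢
    rw [this]
  · intro hw
    refine ⟨p.symm w.1, (p.symm w.1).2, ?_⟩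
    rw [LinearEquiv.coe_coe, hp, p.apply_symm_apply, ← hw]

lemma map_turn_scalar (t : ℝ) :
    (graphOf ((t : ℂ) • (1 : Matrix (Fin n) (Fin n) ℂ))).map (turn n t).toLinearMap
      = vertSub n := by
  ext w
  simp only [graphOf, vertSub, Submodule.mem_prod, Submodule.mem_bot, Submodule.mem_top, and_true]
  constructor
  · rintro ⟨v, hv, rfl⟩
    have hv' : v.2 = (t : ℂ) • v.1 := by simpa [smul_mulVec] using hv
    simp [turn_apply, hv']
  · intro hw
    refine ⟨(-w.2, -((t : ℂ) • w.2)), by simp, ?_⟩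
    apply Prod.ext <;> simp [turn_apply, hw]

lemma map_shear_graph (A B : Matrix (Fin n) (Fin n) ℂ) :
    (graphOf B).map (shear A).toLinearMap = graphOf (B - A) := by
  ext w
  simp only [graphOf]
  constructor
  · rintro ⟨v, hv, rfl⟩
    have hv' : v.2 = B *ᵥ v.1 := by simpa using hv
    simp [shear_apply, hv']
  · intro hw
    have hw' : w.2 = B *ᵥ w.1 - A *ᵥ w.1 := by simpa [sub_mulVec] using hw
    refine ⟨(w.1, B *ᵥ w.1), by simp, ?_⟩
    apply Prod.ext <;> simp [shear_apply, hw']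

lemma map_shear_vert (A : Matrix (Fin n) (Fin n) ℂ) :
    (vertSub n).map (shear A).toLinearMap = vertSub n := by
  ext w
  simp only [vertSub, Submodule.mem_prod, Submodule.mem_bot, Submodule.mem_top, and_true]
  constructor
  · rintro ⟨v, hv, rfl⟩
    have hv' : v.1 = 0 := by simpa [Submodule.mem_prod] using hv
    simp [shear_apply, hv']
  · intro hw
    refine ⟨w, by simp [hw], ?_⟩
    apply Prod.ext <;> simp [shear_apply, hw]

lemma IsSymplecticMap.trans {S T : SympSpace n ≃ₗ[ℂ] SympSpace n} (hS : IsSymplecticMap S)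
    (hT : IsSymplecticMap T) : IsSymplecticMap (S ≪≫ₗ T) := fun u v => by
  rw [LinearEquiv.trans_apply, LinearEquiv.trans_apply, hT, hS]

/-- The value of `f` on a triple whose last entry is transverse to the other two: after `turn n t`
and a shear, this is the normalization axiom. -/
lemma f_eq_negIdxM {f : LagGr n → LagGr n → LagGr n → ℤ} (hf : SatisfiesDuiAxioms f) {t : ℝ}
    {A B : Matrix (Fin n) (Fin n) ℂ} (hA : A.IsHermitian) (hB : B.IsHermitian) {L M N : LagGr n}
    (hL : L.val.map (turn n t).toLinearMap = graphOf A)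
    (hM : M.val.map (turn n t).toLinearMap = graphOf B)
    (hN : N.val.map (turn n t).toLinearMap = vertSub n) :
    f L M N = negIdxM (B - A) := by
  have hS := (turn_symplectic (n := n) t).trans (shear_symplectic hA)
  rw [← hf.2.1 _ hS L M N ⟨_, L.2.map hS⟩ ⟨_, M.2.map hS⟩ ⟨_, N.2.map hS⟩ rfl rfl rfl]
  apply hf.1 _ (hB.sub hA)
  · dsimp only
    rw [LinearEquiv.coe_trans, Submodule.map_comp, hL, map_shear_graph, sub_self]
  · dsimp only
    rw [LinearEquiv.coe_trans, Submodule.map_comp, hM, map_shear_graph]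
  · dsimp only
    rw [LinearEquiv.coe_trans, Submodule.map_comp, hN, map_shear_vert]

/-- `G_A ∩ G_B` projects isomorphically onto `ker (B - A)`. -/
lemma finrank_inf {L M : Submodule ℂ (SympSpace n)} {t : ℝ} {A B : Matrix (Fin n) (Fin n) ℂ}
    (hL : L.map (turn n t).toLinearMap = graphOf A)
    (hM : M.map (turn n t).toLinearMap = graphOf B) :
    Module.finrank ℂ ↥(L ⊓ M) = Module.finrank ℂ (LinearMap.ker (B - A).mulVecLin) := by
  rw [← LinearEquiv.finrank_map_eq (turn n t) (L ⊓ M), Submodule.map_inf _ (turn n t).injective,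
    hL, hM]
  have h : graphOf A ⊓ graphOf B = (LinearMap.ker (B - A).mulVecLin).map
      (LinearMap.prod LinearMap.id A.mulVecLin) := by
    ext w
    simp only [graphOf, Submodule.mem_inf, LinearMap.mem_graph_iff, mulVecLin_apply,
      Submodule.mem_map, LinearMap.mem_ker, sub_mulVec, sub_eq_zero]
    constructor
    · rintro ⟨h1, h2⟩
      exact ⟨w.1, h2.symm.trans h1, Prod.ext rfl h1.symm⟩
    · rintro ⟨x, hx, rfl⟩
      exact ⟨rfl, hx.symm⟩
  rw [h]
  have hinj : Function.Injective (LinearMap.prod LinearMap.id A.mulVecLin) :=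
    fun x y hxy => congrArg Prod.fst hxy
  exact (Submodule.equivMapOfInjective _ hinj _).finrank_eq.symm

/-- The coordinates `(-x₁ + x₂ + x₃, x₁ - x₂ + x₃, x₁ + x₂ - x₃)`, which split the form `Ω` of three
graphs into an orthogonal sum. -/
noncomputable def splitEquiv (E : Type*) [AddCommGroup E] [Module ℂ E] :
    (E × E × E) ≃ₗ[ℂ] (E × E × E) where
  toFun x := (-x.1 + x.2.1 + x.2.2, x.1 - x.2.1 + x.2.2, x.1 + x.2.1 - x.2.2)
  invFun u := ((1 / 2 : ℂ) • (u.2.1 + u.2.2), (1 / 2 : ℂ) • (u.1 + u.2.2),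
    (1 / 2 : ℂ) • (u.1 + u.2.1))
  map_add' x y := by ext <;> simp <;> abel
  map_smul' c x := by ext <;> simp [smul_add, smul_sub]
  left_inv x := by ext <;> simp <;> module
  right_inv x := by ext <;> simp <;> module

lemma re_herm_symm {A : Matrix (Fin n) (Fin n) ℂ} (hA : A.IsHermitian) (x y : Fin n → ℂ) :
    (star x ⬝ᵥ A *ᵥ y).re = (star y ⬝ᵥ A *ᵥ x).re := by
  rw [← dot_herm hA, ← star_dot_conj, Complex.star_def, Complex.conj_re]

/-- In the coordinates of three graphs, `Ω` is the sum over the cyclic pairs `(i, j)` of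
`2 Re ⟨xᵢ, (Aⱼ - Aᵢ) xⱼ⟩`. Since the three differences add up to zero, all cross terms cancel after
`splitEquiv`, leaving half the orthogonal sum of the forms of the differences. -/
lemma tripleForm_inertia {L₁ L₂ L₃ : Submodule ℂ (SympSpace n)} {t : ℝ}
    {A₁ A₂ A₃ : Matrix (Fin n) (Fin n) ℂ}
    (h₁ : A₁.IsHermitian) (h₂ : A₂.IsHermitian) (h₃ : A₃.IsHermitian)
    (p₁ : L₁ ≃ₗ[ℂ] (Fin n → ℂ)) (p₂ : L₂ ≃ₗ[ℂ] (Fin n → ℂ)) (p₃ : L₃ ≃ₗ[ℂ] (Fin n → ℂ))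
    (hp₁ : ∀ v : L₁, turn n t v = (p₁ v, A₁ *ᵥ p₁ v))
    (hp₂ : ∀ v : L₂, turn n t v = (p₂ v, A₂ *ᵥ p₂ v))
    (hp₃ : ∀ v : L₃, turn n t v = (p₃ v, A₃ *ᵥ p₃ v)) :
    formPosIdx (tripleForm L₁ L₂ L₃)
      = posIdxM (A₃ - A₂) + posIdxM (A₁ - A₃) + posIdxM (A₂ - A₁) ∧
    formNegIdx (tripleForm L₁ L₂ L₃)
      = negIdxM (A₃ - A₂) + negIdxM (A₁ - A₃) + negIdxM (A₂ - A₁) := by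
  apply inertia_sum _ (h₃.sub h₂) (h₁.sub h₃) (h₂.sub h₁)
    (p₁.prodCongr (p₂.prodCongr p₃) ≪≫ₗ splitEquiv (Fin n → ℂ))
  rintro ⟨v₁, v₂, v₃⟩
  simp only [tripleForm]
  rw [← turn_symplectic t v₁.1 v₂.1, ← turn_symplectic t v₂.1 v₃.1, ← turn_symplectic t v₃.1 v₁.1,
    ← turn_symplectic t v₂.1 v₁.1, ← turn_symplectic t v₃.1 v₂.1, ← turn_symplectic t v₁.1 v₃.1,
    hp₁, hp₂, hp₃]
  simp only [LinearEquiv.trans_apply, LinearEquiv.prodCongr_apply, splitEquiv,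
    LinearEquiv.coe_mk, LinearMap.coe_mk, AddHom.coe_mk]
  generalize p₁ v₁ = x
  generalize p₂ v₂ = y
  generalize p₃ v₃ = z
  simp only [omegaForm, dot_herm h₁, dot_herm h₂, dot_herm h₃, sub_mulVec, mulVec_add, mulVec_sub,
    mulVec_neg, star_add, star_sub, star_neg, add_dotProduct, sub_dotProduct, neg_dotProduct,
    dotProduct_add, dotProduct_sub, dotProduct_neg, Complex.add_re, Complex.sub_re, Complex.neg_re]
  have s₁ := re_herm_symm h₁
  have s₂ := re_herm_symm h₂
  have s₃ := re_herm_symm h₃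
  linarith [s₁ x y, s₁ y z, s₁ z x, s₂ x y, s₂ y z, s₂ z x, s₃ x y, s₃ y z, s₃ z x]

end Reduction

/-- The Hörmander–Kashiwara–Wall index `s = n₊(Ω) − n₋(Ω)` satisfies
`s(L₁,L₂,L₃) = f(L₂,L₁,L₃) − f(L₃,L₁,L₂)`, equivalently
`2 f(L₁,L₂,L₃) = n − dim(L₁∩L₂) + dim(L₁∩L₃) − dim(L₂∩L₃) − s(L₁,L₂,L₃)`. -/
theorem duistermaat_vs_kashiwara (n : ℕ) (hn : 1 ≤ n)
    (f : LagGr n → LagGr n → LagGr n → ℤ) (hf : SatisfiesDuiAxioms f)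
    (L₁ L₂ L₃ : LagGr n) :
    (formPosIdx (tripleForm L₁.val L₂.val L₃.val) : ℤ)
        - formNegIdx (tripleForm L₁.val L₂.val L₃.val)
      = f L₂ L₁ L₃ - f L₃ L₁ L₂ ∧
    2 * f L₁ L₂ L₃
      = (n : ℤ) - Module.finrank ℂ ↥(L₁.val ⊓ L₂.val)
        + Module.finrank ℂ ↥(L₁.val ⊓ L₃.val)
        - Module.finrank ℂ ↥(L₂.val ⊓ L₃.val)
        - ((formPosIdx (tripleForm L₁.val L₂.val L₃.val) : ℤ)
          - formNegIdx (tripleForm L₁.val L₂.val L₃.val)) := by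
  -- a real scalar whose graph `N` is transverse to all three planes
  obtain ⟨t, ht⟩ := (((finite_bad L₁.2).union (finite_bad L₂.2)).union
    (finite_bad L₃.2)).exists_notMem
  simp only [Set.mem_union, Set.mem_ofPred_eq, not_or, not_exists, not_and] at ht
  obtain ⟨⟨ht₁, ht₂⟩, ht₃⟩ := ht
  obtain ⟨A₁, h₁, p₁, hp₁⟩ := exists_herm L₁.2 fun x hx => by_contra fun h0 => ht₁ x h0 hx
  obtain ⟨A₂, h₂, p₂, hp₂⟩ := exists_herm L₂.2 fun x hx => by_contra fun h0 => ht₂ x h0 hx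
  obtain ⟨A₃, h₃, p₃, hp₃⟩ := exists_herm L₃.2 fun x hx => by_contra fun h0 => ht₃ x h0 hx
  have hI : ((t : ℂ) • (1 : Matrix (Fin n) (Fin n) ℂ)).IsHermitian := by
    simp [Matrix.IsHermitian, conjTranspose_smul]
  let N : LagGr n := ⟨_, graphOf_isLagrangian hI⟩
  have m₁ := map_turn_eq p₁ hp₁
  have m₂ := map_turn_eq p₂ hp₂
  have m₃ := map_turn_eq p₃ hp₃
  have mN : N.val.map (turn n t).toLinearMap = vertSub n := map_turn_scalar t
  obtain ⟨hpos, hneg⟩ := tripleForm_inertia h₁ h₂ h₃ p₁ p₂ p₃ hp₁ hp₂ hp₃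
  have k₁₂ := posIdxM_add_negIdxM (h₂.sub h₁)
  have k₂₃ := posIdxM_add_negIdxM (h₃.sub h₂)
  have k₃₁ := posIdxM_add_negIdxM (h₁.sub h₃)
  rw [finrank_inf m₁ m₂, finrank_inf m₂ m₃, inf_comm L₁.val L₃.val, finrank_inf m₃ m₁, hpos, hneg]
  have f₁₂ := f_eq_negIdxM hf h₁ h₂ m₁ m₂ mN
  have f₂₁ := f_eq_negIdxM hf h₂ h₁ m₂ m₁ mN
  have f₁₃ := f_eq_negIdxM hf h₁ h₃ m₁ m₃ mN
  have f₃₁ := f_eq_negIdxM hf h₃ h₁ m₃ m₁ mN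
  have f₂₃ := f_eq_negIdxM hf h₂ h₃ m₂ m₃ mN
  have f₃₂ := f_eq_negIdxM hf h₃ h₂ m₃ m₂ mN
  rw [← neg_sub, negIdxM_neg] at f₂₁ f₁₃ f₃₂
  -- the cocycle property expresses `f` through triples ending in `N`
  have c₁ := hf.2.2 L₁ L₂ L₃ N
  have c₂ := hf.2.2 L₂ L₁ L₃ N
  have c₃ := hf.2.2 L₃ L₁ L₂ N
  zify at k₁₂ k₂₃ k₃₁
  push_cast
  constructor <;> linarith
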